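/- Let u be a monotone traveling wave solution of the balanced Allen-Cahn equation in the plane, and let γ : ℝ → ℝ be the C¹ function whose graph y = γ(x) is the zero level set of u (i.e. u(x, γ(x)) = 0 for all x). Then |γ'(x)| → ∞ as |x| → ∞. -/

import Mathlib

open Real Filter MeasureTheory Metric

noncomputable def pdx (u : ℝ → ℝ → ℝ) (x y : ℝ) : ℝ := deriv (fun t => u t y) x

noncomputable def pdy (u : ℝ → ℝ → ℝ) (x y : ℝ) : ℝ := deriv (fun t => u x t) y

noncomputable def pdxx (u : ℝ → ℝ → ℝ) (x y : ℝ) : ℝ := deriv (fun t => pdx u t y) x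

noncomputable def pdyy (u : ℝ → ℝ → ℝ) (x y : ℝ) : ℝ := deriv (fun t => pdy u x t) y

/-- `F` is a balanced double-well potential. -/
def BalancedDoubleWell (F : ℝ → ℝ) : Prop :=
  ContDiff ℝ 3 F ∧ deriv F (-1) = 0 ∧ deriv F 1 = 0 ∧
  0 < deriv (deriv F) (-1) ∧ 0 < deriv (deriv F) 1 ∧
  (∀ s ∈ Set.Ioo (-1 : ℝ) 0, 0 < deriv F s) ∧
  (∀ s ∈ Set.Ioo (0 : ℝ) 1, deriv F s < 0) ∧
  F (-1) = 0 ∧ F 1 = 0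

/-- `u` is a `C³` solution of `Δu + c uᵧ = F'(u)` on `ℝ²` with `|u| ≤ 1`
which is monotone in `y`. -/
def IsSolution (F : ℝ → ℝ) (c : ℝ) (u : ℝ → ℝ → ℝ) : Prop :=
  ContDiff ℝ 3 (fun p : ℝ × ℝ => u p.1 p.2) ∧
  (∀ x y : ℝ, pdxx u x y + pdyy u x y + c * pdy u x y = deriv F (u x y)) ∧
  (∀ x y : ℝ, |u x y| ≤ 1) ∧
  (∀ x y : ℝ, 0 < pdy u x y)

/-- A monotone traveling wave solution connecting `-1` to `1`. -/
def IsTravelingWave (F : ℝ → ℝ) (c : ℝ) (u : ℝ → ℝ → ℝ) : Prop :=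
  IsSolution F c u ∧
  (∀ x : ℝ, Tendsto (fun y => u x y) atTop (nhds 1)) ∧
  (∀ x : ℝ, Tendsto (fun y => u x y) atBot (nhds (-1)))

section PartialDerivatives

variable {w : ℝ → ℝ → ℝ}

lemma pdx_eq_fderiv (hw : ContDiff ℝ 1 (fun p : ℝ × ℝ => w p.1 p.2)) (x y : ℝ) :
    pdx w x y = fderiv ℝ (fun p : ℝ × ℝ => w p.1 p.2) (x, y) (1, 0) := by
  have h := (hw.differentiable one_ne_zero (x, y)).hasFDerivAt
  exact (h.comp_hasDerivAt (f := fun t : ℝ => (t, y)) x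
    ((hasDerivAt_id x).prodMk (hasDerivAt_const x y))).deriv

lemma pdy_eq_fderiv (hw : ContDiff ℝ 1 (fun p : ℝ × ℝ => w p.1 p.2)) (x y : ℝ) :
    pdy w x y = fderiv ℝ (fun p : ℝ × ℝ => w p.1 p.2) (x, y) (0, 1) := by
  have h := (hw.differentiable one_ne_zero (x, y)).hasFDerivAt
  exact (h.comp_hasDerivAt (f := fun t : ℝ => (x, t)) y
    ((hasDerivAt_const y x).prodMk (hasDerivAt_id y))).deriv

lemma hasDerivAt_pdx (hw : ContDiff ℝ 1 (fun p : ℝ × ℝ => w p.1 p.2)) (x y : ℝ) :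
    HasDerivAt (fun t => w t y) (pdx w x y) x := by
  have h : ContDiff ℝ 1 (fun t => w t y) :=
    hw.comp (f := fun t : ℝ => (t, y)) (contDiff_id.prodMk contDiff_const)
  exact (h.differentiable one_ne_zero x).hasDerivAt

lemma hasDerivAt_pdy (hw : ContDiff ℝ 1 (fun p : ℝ × ℝ => w p.1 p.2)) (x y : ℝ) :
    HasDerivAt (fun t => w x t) (pdy w x y) y := by
  have h : ContDiff ℝ 1 (fun t => w x t) :=
    hw.comp (f := fun t : ℝ => (x, t)) (contDiff_const.prodMk contDiff_id)
  exact (h.differentiable one_ne_zero y).hasDerivAt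

lemma contDiff_pdx {m n : WithTop ℕ∞} (hmn : m + 1 ≤ n)
    (hw : ContDiff ℝ n (fun p : ℝ × ℝ => w p.1 p.2)) :
    ContDiff ℝ m (fun p : ℝ × ℝ => pdx w p.1 p.2) := by
  have h1 : ContDiff ℝ 1 (fun p : ℝ × ℝ => w p.1 p.2) := hw.of_le (le_add_self.trans hmn)
  simp_rw [pdx_eq_fderiv h1]
  exact (hw.fderiv_right hmn).clm_apply contDiff_const

lemma contDiff_pdy {m n : WithTop ℕ∞} (hmn : m + 1 ≤ n)
    (hw : ContDiff ℝ n (fun p : ℝ × ℝ => w p.1 p.2)) :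
    ContDiff ℝ m (fun p : ℝ × ℝ => pdy w p.1 p.2) := by
  have h1 : ContDiff ℝ 1 (fun p : ℝ × ℝ => w p.1 p.2) := hw.of_le (le_add_self.trans hmn)
  simp_rw [pdy_eq_fderiv h1]
  exact (hw.fderiv_right hmn).clm_apply contDiff_const

lemma pdx_pdy_comm (hw : ContDiff ℝ 2 (fun p : ℝ × ℝ => w p.1 p.2)) (x y : ℝ) :
    pdx (pdy w) x y = pdy (pdx w) x y := by
  have h1 : ContDiff ℝ 1 (fun p : ℝ × ℝ => w p.1 p.2) := hw.of_le one_le_two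
  have h2 : DifferentiableAt ℝ (fderiv ℝ (fun p : ℝ × ℝ => w p.1 p.2)) (x, y) :=
    (hw.fderiv_right (m := 1) (by norm_num)).differentiable one_ne_zero _
  rw [pdx_eq_fderiv (contDiff_pdy (by norm_num) hw), pdy_eq_fderiv (contDiff_pdx (by norm_num) hw)]
  simp_rw [pdx_eq_fderiv h1, pdy_eq_fderiv h1]
  rw [fderiv_clm_apply h2 (differentiableAt_const _), fderiv_clm_apply h2 (differentiableAt_const _)]
  simpa using (hw.contDiffAt.isSymmSndFDerivAt (by simp)) (1, 0) (0, 1)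

end PartialDerivatives

section GradientEstimate

lemma IsLocalMax.deriv_deriv_nonpos {f : ℝ → ℝ} {x : ℝ} (h : IsLocalMax f x)
    (hf : ContinuousAt f x) : deriv (deriv f) x ≤ 0 := by
  by_contra! hpos
  have hmin := isLocalMin_of_deriv_deriv_pos hpos h.deriv_eq_zero hf
  have hconst : f =ᶠ[nhds x] fun _ => f x := by
    filter_upwards [h, hmin] with t ht ht' using le_antisymm ht ht'
  have := hconst.deriv.deriv_eq
  simp at this
  linarith

/-- Weak maximum principle for strict subsolutions of the Laplace equation on a rectangle. -/
lemma nonpos_of_laplacian_pos {g : ℝ → ℝ → ℝ} (hg : Continuous (fun p : ℝ × ℝ => g p.1 p.2))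
    {a b a' b' : ℝ}
    (hpos : ∀ x ∈ Set.Ioo a b, ∀ y ∈ Set.Ioo a' b', 0 < pdxx g x y + pdyy g x y)
    (hbd : ∀ x ∈ Set.Icc a b, ∀ y ∈ Set.Icc a' b',
      x = a ∨ x = b ∨ y = a' ∨ y = b' → g x y ≤ 0)
    {x y : ℝ} (hx : x ∈ Set.Icc a b) (hy : y ∈ Set.Icc a' b') : g x y ≤ 0 := by
  obtain ⟨⟨s, t⟩, ⟨hs, ht⟩, hmax⟩ :=
    (isCompact_Icc.prod isCompact_Icc).exists_isMaxOn ⟨(x, y), ⟨hx, hy⟩⟩ hg.continuousOn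
  have hle : g x y ≤ g s t := hmax (⟨hx, hy⟩ : (x, y) ∈ Set.Icc a b ×ˢ Set.Icc a' b')
  refine hle.trans ?_
  by_cases hb : s = a ∨ s = b ∨ t = a' ∨ t = b'
  · exact hbd s hs t ht hb
  push Not at hb
  obtain ⟨h1, h2, h3, h4⟩ := hb
  have hs' : s ∈ Set.Ioo a b := ⟨lt_of_le_of_ne hs.1 (Ne.symm h1), lt_of_le_of_ne hs.2 h2⟩
  have ht' : t ∈ Set.Ioo a' b' := ⟨lt_of_le_of_ne ht.1 (Ne.symm h3), lt_of_le_of_ne ht.2 h4⟩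
  have hxx : pdxx g s t ≤ 0 := by
    refine IsLocalMax.deriv_deriv_nonpos (f := fun r => g r t) ?_
      (hg.comp (Continuous.prodMk_left t)).continuousAt
    filter_upwards [Icc_mem_nhds hs'.1 hs'.2] with r hr using
      hmax (⟨hr, ht⟩ : (r, t) ∈ Set.Icc a b ×ˢ Set.Icc a' b')
  have hyy : pdyy g s t ≤ 0 := by
    refine IsLocalMax.deriv_deriv_nonpos (f := fun r => g s r) ?_
      (hg.comp (Continuous.prodMk_right s)).continuousAt
    filter_upwards [Icc_mem_nhds ht'.1 ht'.2] with r hr using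
      hmax (⟨hs, hr⟩ : (s, r) ∈ Set.Icc a b ×ˢ Set.Icc a' b')
  linarith [hpos s hs' t ht']

/-- Interior gradient estimate for the Poisson equation, by comparing the odd part of `w` with a
quadratic barrier on half of the square. -/
lemma pdx_le_of_laplacian_bound {w : ℝ → ℝ → ℝ}
    (hw : ContDiff ℝ 2 (fun p : ℝ × ℝ => w p.1 p.2)) {a b M N : ℝ} (hN : 0 < N)
    (hM : ∀ x y, |x - a| ≤ 1 → |y - b| ≤ 1 → |w x y| ≤ M)
    (hL : ∀ x y, |x - a| ≤ 1 → |y - b| ≤ 1 → |pdxx w x y + pdyy w x y| ≤ N) :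
    pdx w a b ≤ 2 * M + N := by
  have h1 : ContDiff ℝ 1 (fun p : ℝ × ℝ => w p.1 p.2) := hw.of_le one_le_two
  have hx1 : ContDiff ℝ 1 (fun p : ℝ × ℝ => pdx w p.1 p.2) := contDiff_pdx (by norm_num) hw
  have hy1 : ContDiff ℝ 1 (fun p : ℝ × ℝ => pdy w p.1 p.2) := contDiff_pdy (by norm_num) hw
  have hM0 : 0 ≤ M := (abs_nonneg _).trans (hM a b (by simp) (by simp))
  set g : ℝ → ℝ → ℝ := fun s t =>
    (w (a + s) (b + t) - w (a - s) (b + t)) / 2 - M * (t ^ 2 + s * (2 - s)) - N * (s * (1 - s))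
    with hg
  have hgc : Continuous (fun p : ℝ × ℝ => g p.1 p.2) := by
    have e1 : Continuous (fun p : ℝ × ℝ => w (a + p.1) (b + p.2)) :=
      h1.continuous.comp (f := fun p : ℝ × ℝ => (a + p.1, b + p.2)) (by fun_prop)
    have e2 : Continuous (fun p : ℝ × ℝ => w (a - p.1) (b + p.2)) :=
      h1.continuous.comp (f := fun p : ℝ × ℝ => (a - p.1, b + p.2)) (by fun_prop)
    simp only [hg]
    fun_prop
  have hgx : ∀ s t, HasDerivAt (fun r => g r t)
      ((pdx w (a + s) (b + t) + pdx w (a - s) (b + t)) / 2 - M * (2 - 2 * s) - N * (1 - 2 * s))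
      s := by
    intro s t
    have e1 := (hasDerivAt_pdx h1 (a + s) (b + t)).comp_const_add a s
    have e2 := (hasDerivAt_pdx h1 (a - s) (b + t)).comp_const_sub a s
    have e3 : HasDerivAt (fun r : ℝ => t ^ 2 + r * (2 - r)) (2 - 2 * s) s := by
      refine (((hasDerivAt_id s).mul ((hasDerivAt_id s).const_sub 2)).const_add
        (t ^ 2)).congr_deriv ?_
      simp only [id]; ring
    have e4 : HasDerivAt (fun r : ℝ => r * (1 - r)) (1 - 2 * s) s := by
      refine ((hasDerivAt_id s).mul ((hasDerivAt_id s).const_sub 1)).congr_deriv ?_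
      simp only [id]; ring
    refine ((((e1.sub e2).div_const 2).sub (e3.const_mul M)).sub (e4.const_mul N)).congr_deriv ?_
    ring
  have hgxx : ∀ s t, pdxx g s t =
      (pdxx w (a + s) (b + t) - pdxx w (a - s) (b + t)) / 2 + 2 * M + 2 * N := by
    intro s t
    have e0 : (fun r => pdx g r t) = fun s =>
      ((pdx w (a + s) (b + t) + pdx w (a - s) (b + t)) / 2 - M * (2 - 2 * s) - N * (1 - 2 * s)) :=
      funext fun r => (hgx r t).deriv
    have e1 := (hasDerivAt_pdx hx1 (a + s) (b + t)).comp_const_add a s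
    have e2 := (hasDerivAt_pdx hx1 (a - s) (b + t)).comp_const_sub a s
    have e3 : ∀ k : ℝ, HasDerivAt (fun r : ℝ => k - 2 * r) (-2) s := by
      intro k
      simpa using ((hasDerivAt_id s).const_mul 2).const_sub k
    rw [pdxx, e0]
    refine ((((e1.add e2).div_const 2).sub ((e3 2).const_mul M)).sub
      ((e3 1).const_mul N)).deriv.trans ?_
    change _ = (pdx (pdx w) (a + s) (b + t) - pdx (pdx w) (a - s) (b + t)) / 2 + 2 * M + 2 * N
    ring
  have hgy : ∀ s t, HasDerivAt (fun r => g s r)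
      ((pdy w (a + s) (b + t) - pdy w (a - s) (b + t)) / 2 - M * (2 * t)) t := by
    intro s t
    have e1 := (hasDerivAt_pdy h1 (a + s) (b + t)).comp_const_add b t
    have e2 := (hasDerivAt_pdy h1 (a - s) (b + t)).comp_const_add b t
    have e3 : HasDerivAt (fun r : ℝ => r ^ 2 + s * (2 - s)) (2 * t) t := by
      simpa using (hasDerivAt_pow 2 t).add_const (s * (2 - s))
    exact (((e1.sub e2).div_const 2).sub (e3.const_mul M)).sub_const _
  have hgyy : ∀ s t, pdyy g s t =
      (pdyy w (a + s) (b + t) - pdyy w (a - s) (b + t)) / 2 - 2 * M := by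
    intro s t
    have e0 : (fun r => pdy g s r) = fun t =>
      ((pdy w (a + s) (b + t) - pdy w (a - s) (b + t)) / 2 - M * (2 * t)) :=
      funext fun r => (hgy s r).deriv
    have e1 := (hasDerivAt_pdy hy1 (a + s) (b + t)).comp_const_add b t
    have e2 := (hasDerivAt_pdy hy1 (a - s) (b + t)).comp_const_add b t
    have e3 := ((hasDerivAt_id t).const_mul 2).const_mul M
    rw [pdyy, e0]
    refine (((e1.sub e2).div_const 2).sub e3).deriv.trans ?_
    change _ = (pdy (pdy w) (a + s) (b + t) - pdy (pdy w) (a - s) (b + t)) / 2 - 2 * M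
    ring
  have hle : ∀ s ∈ Set.Icc (0 : ℝ) 1, g s 0 ≤ 0 := by
    intro s hs
    refine nonpos_of_laplacian_pos hgc (a := 0) (b := 1) (a' := -1) (b' := 1) ?_ ?_ hs (by simp)
    · intro x hx y hy
      have k1 := abs_le.1 (hL (a + x) (b + y) (by rw [abs_le]; constructor <;> linarith [hx.1, hx.2])
        (by rw [abs_le]; constructor <;> linarith [hy.1, hy.2]))
      have k2 := abs_le.1 (hL (a - x) (b + y) (by rw [abs_le]; constructor <;> linarith [hx.1, hx.2])
        (by rw [abs_le]; constructor <;> linarith [hy.1, hy.2]))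
      rw [hgxx, hgyy]
      linarith [k1.1, k1.2, k2.1, k2.2]
    · intro x hx y hy hb
      have k1 := abs_le.1 (hM (a + x) (b + y) (by rw [abs_le]; constructor <;> linarith [hx.1, hx.2])
        (by rw [abs_le]; constructor <;> linarith [hy.1, hy.2]))
      have k2 := abs_le.1 (hM (a - x) (b + y) (by rw [abs_le]; constructor <;> linarith [hx.1, hx.2])
        (by rw [abs_le]; constructor <;> linarith [hy.1, hy.2]))
      have k3 : 0 ≤ N * (x * (1 - x)) :=
        mul_nonneg hN.le (mul_nonneg hx.1 (by linarith [hx.2]))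
      have k4 : 0 ≤ M * (x * (2 - x)) :=
        mul_nonneg hM0 (mul_nonneg hx.1 (by linarith [hx.2]))
      have k5 : 0 ≤ M * y ^ 2 := by positivity
      simp only [hg]
      rcases hb with rfl | rfl | rfl | rfl
      · simp only [add_zero, sub_zero, sub_self]; nlinarith
      all_goals nlinarith [k1.1, k1.2, k2.1, k2.2]
  have hslope : (pdx w a b + pdx w a b) / 2 - M * 2 - N ≤ 0 := by
    have hd := hgx 0 0
    have hd' := (hasDerivWithinAt_iff_tendsto_slope' Set.self_notMem_Ioi).1
      (hd.hasDerivWithinAt (s := Set.Ioi 0))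
    have := le_of_tendsto hd' (b := 0) (by
      filter_upwards [Ioo_mem_nhdsGT (zero_lt_one' ℝ)] with s hs
      rw [slope_def_field]
      have g0 : g 0 0 = 0 := by simp [hg]
      rw [g0]
      exact div_nonpos_of_nonpos_of_nonneg (by linarith [hle s ⟨hs.1.le, hs.2.le⟩])
        (by linarith [hs.1]))
    simpa using this
  linarith

lemma abs_pdx_le_of_laplacian_bound {w : ℝ → ℝ → ℝ}
    (hw : ContDiff ℝ 2 (fun p : ℝ × ℝ => w p.1 p.2)) {a b M N : ℝ} (hN : 0 < N)
    (hM : ∀ x y, |x - a| ≤ 1 → |y - b| ≤ 1 → |w x y| ≤ M)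
    (hL : ∀ x y, |x - a| ≤ 1 → |y - b| ≤ 1 → |pdxx w x y + pdyy w x y| ≤ N) :
    |pdx w a b| ≤ 2 * M + N := by
  have hneg := pdx_le_of_laplacian_bound (w := fun x y => -w x y) hw.neg hN
    (a := a) (b := b) (M := M) (by simpa using hM) (by
      intro x y hx hy
      have := hL x y hx hy
      simp only [pdxx, pdyy, pdx, pdy, deriv.fun_neg] at this ⊢
      rwa [← neg_add, abs_neg])
  have : pdx (fun x y => -w x y) a b = -pdx w a b := by simp [pdx]
  rw [this] at hneg
  exact abs_le.2 ⟨by linarith, pdx_le_of_laplacian_bound hw hN hM hL⟩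

lemma abs_pdy_le_of_laplacian_bound {w : ℝ → ℝ → ℝ}
    (hw : ContDiff ℝ 2 (fun p : ℝ × ℝ => w p.1 p.2)) {a b M N : ℝ} (hN : 0 < N)
    (hM : ∀ x y, |x - a| ≤ 1 → |y - b| ≤ 1 → |w x y| ≤ M)
    (hL : ∀ x y, |x - a| ≤ 1 → |y - b| ≤ 1 → |pdxx w x y + pdyy w x y| ≤ N) :
    |pdy w a b| ≤ 2 * M + N :=
  abs_pdx_le_of_laplacian_bound (w := fun x y => w y x)
    (hw.comp (f := fun p : ℝ × ℝ => (p.2, p.1)) (contDiff_snd.prodMk contDiff_fst)) hN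
    (fun x y hx hy => hM y x hy hx)
    (fun x y hx hy => by rw [add_comm]; exact hL y x hy hx)

/-- Interior gradient estimate for the operator `Δ + c ∂ᵧ`. -/
lemma exists_gradient_bound (c K : ℝ) : ∃ C : ℝ, 0 < C ∧ ∀ w : ℝ → ℝ → ℝ,
    ContDiff ℝ 2 (fun p : ℝ × ℝ => w p.1 p.2) → ∀ a b δ : ℝ, 0 < δ →
    (∀ x y, |x - a| ≤ 1 → |y - b| ≤ 1 → |w x y| ≤ δ) →
    (∀ x y, |x - a| ≤ 1 → |y - b| ≤ 1 →
      |pdxx w x y + pdyy w x y + c * pdy w x y| ≤ K * δ) →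
    |pdx w a b| ≤ C * δ ∧ |pdy w a b| ≤ C * δ := by
  set E := exp (|c| / 2) with hE
  have hE0 : 0 < E := exp_pos _
  have hE1 : ∀ y b : ℝ, |y - b| ≤ 1 → exp (c / 2 * (y - b)) ≤ E := by
    intro y b hy
    refine exp_le_exp.2 ((le_abs_self _).trans ?_)
    rw [abs_mul, abs_div, abs_two]
    nlinarith [abs_nonneg c, abs_nonneg (y - b)]
  refine ⟨2 * E + E * (|K| + c ^ 2 / 4 + 1) + |c| / 2, by positivity, ?_⟩
  intro w hw a b δ hδ hM hL
  have h1 : ContDiff ℝ 1 (fun p : ℝ × ℝ => w p.1 p.2) := hw.of_le one_le_two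
  have hy1 : ContDiff ℝ 1 (fun p : ℝ × ℝ => pdy w p.1 p.2) := contDiff_pdy (by norm_num) hw
  set z : ℝ → ℝ → ℝ := fun x y => exp (c / 2 * (y - b)) * w x y with hz
  have hzc : ContDiff ℝ 2 (fun p : ℝ × ℝ => z p.1 p.2) := by
    have : ContDiff ℝ 2 (fun p : ℝ × ℝ => exp (c / 2 * (p.2 - b))) := by fun_prop
    exact this.mul hw
  have hexp : ∀ y, HasDerivAt (fun t => exp (c / 2 * (t - b)))
      (exp (c / 2 * (y - b)) * (c / 2)) y := by
    intro y
    simpa using (((hasDerivAt_id y).sub_const b).const_mul (c / 2)).exp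
  have hzx : ∀ x y, pdx z x y = exp (c / 2 * (y - b)) * pdx w x y := by
    intro x y
    simp [pdx, hz]
  have hzxx : ∀ x y, pdxx z x y = exp (c / 2 * (y - b)) * pdxx w x y := by
    intro x y
    simp [pdxx, hzx]
  have hzy : ∀ x y, pdy z x y = exp (c / 2 * (y - b)) * (pdy w x y + c / 2 * w x y) := by
    intro x y
    refine ((hexp y).mul (hasDerivAt_pdy h1 x y)).deriv.trans ?_
    ring
  have hzyy : ∀ x y, pdyy z x y =
      exp (c / 2 * (y - b)) * (pdyy w x y + c * pdy w x y + c ^ 2 / 4 * w x y) := by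
    intro x y
    simp only [pdyy, hzy]
    refine ((hexp y).mul ((hasDerivAt_pdy hy1 x y).add
      ((hasDerivAt_pdy h1 x y).const_mul (c / 2)))).deriv.trans ?_
    simp only [pdy, Pi.add_apply]
    ring
  have hzM : ∀ x y, |x - a| ≤ 1 → |y - b| ≤ 1 → |z x y| ≤ E * δ := by
    intro x y hx hy
    rw [hz, abs_mul, abs_of_pos (exp_pos _)]
    exact mul_le_mul (hE1 y b hy) (hM x y hx hy) (abs_nonneg _) hE0.le
  have hzL : ∀ x y, |x - a| ≤ 1 → |y - b| ≤ 1 →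
      |pdxx z x y + pdyy z x y| ≤ E * ((|K| + c ^ 2 / 4 + 1) * δ) := by
    intro x y hx hy
    rw [hzxx, hzyy, ← mul_add, abs_mul, abs_of_pos (exp_pos _)]
    refine mul_le_mul (hE1 y b hy) ?_ (abs_nonneg _) hE0.le
    calc |pdxx w x y + (pdyy w x y + c * pdy w x y + c ^ 2 / 4 * w x y)|
        = |(pdxx w x y + pdyy w x y + c * pdy w x y) + c ^ 2 / 4 * w x y| := by ring_nf
      _ ≤ K * δ + c ^ 2 / 4 * δ := by
          refine (abs_add_le _ _).trans (add_le_add (hL x y hx hy) ?_)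
          rw [abs_mul, abs_of_nonneg (by positivity)]
          exact mul_le_mul_of_nonneg_left (hM x y hx hy) (by positivity)
      _ ≤ (|K| + c ^ 2 / 4 + 1) * δ := by nlinarith [le_abs_self K]
  have hN : 0 < E * ((|K| + c ^ 2 / 4 + 1) * δ) := by positivity
  have hx := abs_pdx_le_of_laplacian_bound hzc hN hzM hzL
  have hy := abs_pdy_le_of_laplacian_bound hzc hN hzM hzL
  rw [hzx] at hx
  rw [hzy] at hy
  simp only [sub_self, mul_zero, exp_zero, one_mul] at hx hy
  have hcw : |c / 2 * w a b| ≤ |c| / 2 * δ := by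
    rw [abs_mul, abs_div, abs_two]
    exact mul_le_mul_of_nonneg_left (hM a b (by simp) (by simp)) (by positivity)
  have hc0 : 0 ≤ |c| / 2 * δ := by positivity
  refine ⟨by linarith, ?_⟩
  have : |pdy w a b| ≤ |pdy w a b + c / 2 * w a b| + |c / 2 * w a b| := by
    simpa using abs_sub (pdy w a b + c / 2 * w a b) (c / 2 * w a b)
  linarith

end GradientEstimate

section Potential

variable {F : ℝ → ℝ}

lemma BalancedDoubleWell.contDiff_deriv (hF : BalancedDoubleWell F) : ContDiff ℝ 2 (deriv F) :=
  (contDiff_succ_iff_deriv (n := 2).1 hF.1).2.2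

lemma BalancedDoubleWell.hasDerivAt (hF : BalancedDoubleWell F) (s : ℝ) :
    HasDerivAt F (deriv F s) s :=
  (hF.1.differentiable (by norm_num) s).hasDerivAt

lemma BalancedDoubleWell.hasDerivAt_deriv (hF : BalancedDoubleWell F) (s : ℝ) :
    HasDerivAt (deriv F) (deriv (deriv F) s) s :=
  (hF.contDiff_deriv.differentiable (by norm_num) s).hasDerivAt

lemma BalancedDoubleWell.exists_bound (hF : BalancedDoubleWell F) : ∃ K : ℝ, 0 < K ∧
    (∀ s, |s| ≤ 1 → |deriv (deriv F) s| ≤ K) ∧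
    ∀ s t, |s| ≤ 1 → |t| ≤ 1 → |deriv F s - deriv F t| ≤ K * |s - t| := by
  have hcont : Continuous (deriv (deriv F)) := hF.contDiff_deriv.continuous_deriv (by norm_num)
  obtain ⟨K, hK⟩ := isCompact_Icc.exists_bound_of_continuousOn
    (s := Set.Icc (-1 : ℝ) 1) hcont.continuousOn
  have hK' : ∀ s, |s| ≤ 1 → |deriv (deriv F) s| ≤ |K| + 1 := fun s hs => by
    have := hK s (abs_le.1 hs)
    rw [norm_eq_abs] at this
    linarith [le_abs_self K]
  refine ⟨|K| + 1, by positivity, hK', fun s t hs ht => ?_⟩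
  exact (convex_Icc (-1 : ℝ) 1).norm_image_sub_le_of_norm_hasDerivWithin_le
    (fun r _ => (hF.hasDerivAt_deriv r).hasDerivWithinAt)
    (fun r hr => hK' r (abs_le.2 hr)) (abs_le.1 ht) (abs_le.1 hs)

lemma BalancedDoubleWell.deriv_zero (hF : BalancedDoubleWell F) : deriv F 0 = 0 := by
  have hcont : Continuous (deriv F) := hF.contDiff_deriv.continuous
  obtain ⟨-, -, -, -, -, hneg, hpos, -⟩ := hF
  apply le_antisymm
  · refine le_of_tendsto (hcont.tendsto 0 |>.mono_left (nhdsWithin_le_nhds (s := Set.Ioi 0))) ?_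
    filter_upwards [Ioo_mem_nhdsGT (zero_lt_one' ℝ)] with s hs using (hpos s hs).le
  · refine ge_of_tendsto (hcont.tendsto 0 |>.mono_left (nhdsWithin_le_nhds (s := Set.Iio 0))) ?_
    filter_upwards [Ioo_mem_nhdsLT (show (-1 : ℝ) < 0 by norm_num)] with s hs using (hneg s hs).le

lemma BalancedDoubleWell.zero_pos (hF : BalancedDoubleWell F) : 0 < F 0 := by
  have hmono : StrictMonoOn F (Set.Icc (-1) 0) :=
    strictMonoOn_of_deriv_pos (convex_Icc _ _) hF.1.continuous.continuousOn
      (by rw [interior_Icc]; exact hF.2.2.2.2.2.1)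
  have := hmono (Set.left_mem_Icc.2 (by norm_num)) (Set.right_mem_Icc.2 (by norm_num))
    (show (-1 : ℝ) < 0 by norm_num)
  rwa [hF.2.2.2.2.2.2.2.1] at this

end Potential

section Solution

variable {F : ℝ → ℝ} {c : ℝ} {u : ℝ → ℝ → ℝ}

/-- The linearised equation satisfied by `uᵧ`. -/
lemma IsSolution.pdy_equation (hF : BalancedDoubleWell F) (hu : IsSolution F c u) (x y : ℝ) :
    pdxx (pdy u) x y + pdyy (pdy u) x y + c * pdy (pdy u) x y
      = deriv (deriv F) (u x y) * pdy u x y := by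
  obtain ⟨h3, heq, -, -⟩ := hu
  have h2 : ContDiff ℝ 2 (fun p : ℝ × ℝ => u p.1 p.2) := h3.of_le (by norm_num)
  have h1 : ContDiff ℝ 1 (fun p : ℝ × ℝ => u p.1 p.2) := h3.of_le (by norm_num)
  have hx2 : ContDiff ℝ 2 (fun p : ℝ × ℝ => pdx u p.1 p.2) := contDiff_pdx (by norm_num) h3
  have hy2 : ContDiff ℝ 2 (fun p : ℝ × ℝ => pdy u p.1 p.2) := contDiff_pdy (by norm_num) h3
  have hxx : ContDiff ℝ 1 (fun p : ℝ × ℝ => pdx (pdx u) p.1 p.2) := contDiff_pdx (by norm_num) hx2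
  have hyy : ContDiff ℝ 1 (fun p : ℝ × ℝ => pdy (pdy u) p.1 p.2) := contDiff_pdy (by norm_num) hy2
  have hcomm : pdx (pdy u) = pdy (pdx u) := by
    ext s t; exact pdx_pdy_comm h2 s t
  have e1 : pdxx (pdy u) x y = pdy (pdx (pdx u)) x y := by
    change pdx (pdx (pdy u)) x y = _
    rw [hcomm, pdx_pdy_comm hx2]
  have e2 := ((hasDerivAt_pdy hxx x y).add (hasDerivAt_pdy hyy x y)).add
    ((hasDerivAt_pdy (hy2.of_le (by norm_num)) x y).const_mul c)
  have e3 := (hF.hasDerivAt_deriv (u x y)).comp y (hasDerivAt_pdy h1 x y)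
  have e4 : (fun t => pdx (pdx u) x t) + (fun t => pdy (pdy u) x t) + (fun t => c * pdy u x t)
      = deriv F ∘ (fun t => u x t) := by
    ext t; exact heq x t
  rw [e1]
  exact e2.unique (e4 ▸ e3)

/-- Gradient estimates for `u` near an equilibrium `σ` and for `uᵧ`. -/
lemma IsSolution.exists_gradient_bound (hF : BalancedDoubleWell F) (hu : IsSolution F c u) :
    ∃ C : ℝ, 0 < C ∧
    (∀ σ, |σ| ≤ 1 → deriv F σ = 0 → ∀ a b δ : ℝ, 0 < δ →
      (∀ x y, |x - a| ≤ 1 → |y - b| ≤ 1 → |u x y - σ| ≤ δ) →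
      |pdx u a b| ≤ C * δ ∧ |pdy u a b| ≤ C * δ) ∧
    (∀ a b δ : ℝ, 0 < δ →
      (∀ x y, |x - a| ≤ 1 → |y - b| ≤ 1 → |pdy u x y| ≤ δ) →
      |pdx (pdy u) a b| ≤ C * δ ∧ |pdy (pdy u) a b| ≤ C * δ) := by
  obtain ⟨K, hK0, hK1, hK2⟩ := hF.exists_bound
  obtain ⟨C, hC, hgrad⟩ := _root_.exists_gradient_bound c K
  have hlin := hu.pdy_equation hF
  obtain ⟨h3, heq, hb, -⟩ := hu
  refine ⟨C, hC, ?_, ?_⟩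
  · intro σ hσ hFσ a b δ hδ hM
    have := hgrad (fun x y => u x y - σ) ((h3.of_le (by norm_num)).sub contDiff_const) a b δ hδ hM
    simp only [pdxx, pdyy, pdx, pdy, deriv_sub_const] at this heq ⊢
    refine this fun x y hx hy => ?_
    rw [heq, ← sub_zero (deriv F (u x y)), ← hFσ]
    exact (hK2 _ _ (hb x y) hσ).trans (mul_le_mul_of_nonneg_left (hM x y hx hy) hK0.le)
  · intro a b δ hδ hM
    refine hgrad (pdy u) (contDiff_pdy (by norm_num) h3) a b δ hδ hM fun x y hx hy => ?_
    rw [hlin, abs_mul]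
    exact mul_le_mul (hK1 _ (hb x y)) (hM x y hx hy) (abs_nonneg _) hK0.le

lemma IsSolution.exists_gradient_le (hF : BalancedDoubleWell F) (hu : IsSolution F c u) :
    ∃ G : ℝ, 0 < G ∧ ∀ x y, |pdx u x y| ≤ G ∧ |pdy u x y| ≤ G := by
  obtain ⟨C, hC, h, -⟩ := hu.exists_gradient_bound hF
  refine ⟨C * 2, by positivity, fun x y => h 1 (by simp) hF.2.2.1 x y 2 two_pos fun s t _ _ => ?_⟩
  have := abs_le.1 (hu.2.2.1 s t)
  rw [abs_le]
  constructor <;> linarith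

/-- The flux of `y`-momentum in the `y` direction. -/
noncomputable def momentumFlux (F : ℝ → ℝ) (u : ℝ → ℝ → ℝ) (x y : ℝ) : ℝ :=
  pdx u x y ^ 2 / 2 - pdy u x y ^ 2 / 2 + F (u x y)

lemma IsSolution.contDiff_momentumFlux (hF : BalancedDoubleWell F) (hu : IsSolution F c u) :
    ContDiff ℝ 1 (fun p : ℝ × ℝ => momentumFlux F u p.1 p.2) := by
  have hx : ContDiff ℝ 1 (fun p : ℝ × ℝ => pdx u p.1 p.2) := contDiff_pdx (by norm_num) hu.1
  have hy : ContDiff ℝ 1 (fun p : ℝ × ℝ => pdy u p.1 p.2) := contDiff_pdy (by norm_num) hu.1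
  exact (((hx.pow 2).div_const 2).sub ((hy.pow 2).div_const 2)).add
    ((hF.1.of_le (by norm_num)).comp (hu.1.of_le (by norm_num)))

/-- The divergence identity obtained by multiplying the equation by `uᵧ`, integrated over a
rectangle. -/
lemma IsSolution.momentum_identity (hF : BalancedDoubleWell F) (hu : IsSolution F c u)
    (a b s t : ℝ) :
    ∫ x in a..b, ∫ y in s..t, c * pdy u x y ^ 2 =
      (((∫ x in a..b, momentumFlux F u x t) - ∫ x in a..b, momentumFlux F u x s)
        + ∫ y in s..t, -(pdx u b y * pdy u b y)) - ∫ y in s..t, -(pdx u a y * pdy u a y) := by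
  have hT := hu.contDiff_momentumFlux hF
  obtain ⟨h3, heq, -, -⟩ := hu
  have h1 : ContDiff ℝ 1 (fun p : ℝ × ℝ => u p.1 p.2) := h3.of_le (by norm_num)
  have h2 : ContDiff ℝ 2 (fun p : ℝ × ℝ => u p.1 p.2) := h3.of_le (by norm_num)
  have hx : ContDiff ℝ 1 (fun p : ℝ × ℝ => pdx u p.1 p.2) := contDiff_pdx (by norm_num) h3
  have hy : ContDiff ℝ 1 (fun p : ℝ × ℝ => pdy u p.1 p.2) := contDiff_pdy (by norm_num) h3
  have hQ : ContDiff ℝ 1 (fun p : ℝ × ℝ => -(pdx u p.1 p.2 * pdy u p.1 p.2)) := (hx.mul hy).neg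
  have hdiv : ∀ x y : ℝ,
      fderiv ℝ (fun p : ℝ × ℝ => -(pdx u p.1 p.2 * pdy u p.1 p.2)) (x, y) (1, 0) +
      fderiv ℝ (fun p : ℝ × ℝ => momentumFlux F u p.1 p.2) (x, y) (0, 1)
        = c * pdy u x y ^ 2 := by
    intro x y
    rw [← pdx_eq_fderiv (w := fun x y => -(pdx u x y * pdy u x y)) hQ,
      ← pdy_eq_fderiv (w := momentumFlux F u) hT]
    have e1 : pdx (fun x y => -(pdx u x y * pdy u x y)) x y =
        -(pdx (pdx u) x y * pdy u x y + pdx u x y * pdx (pdy u) x y) :=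
      ((hasDerivAt_pdx hx x y).mul (hasDerivAt_pdx hy x y)).neg.deriv
    have e2 : pdy (momentumFlux F u) x y =
        pdx u x y * pdy (pdx u) x y - pdy u x y * pdy (pdy u) x y
          + deriv F (u x y) * pdy u x y := by
      refine (((((hasDerivAt_pdy hx x y).pow 2).div_const 2).sub
        (((hasDerivAt_pdy hy x y).pow 2).div_const 2)).add
        ((hF.hasDerivAt (u x y)).comp y (hasDerivAt_pdy h1 x y))).deriv.trans ?_
      norm_num
      ring
    rw [e1, e2, pdx_pdy_comm h2, ← heq]
    change -(pdx (pdx u) x y * pdy u x y + _) + (_ - _ +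
      (pdx (pdx u) x y + pdy (pdy u) x y + c * pdy u x y) * pdy u x y) = _
    ring
  have key := integral2_divergence_prod_of_hasFDerivAt
    (fun p : ℝ × ℝ => -(pdx u p.1 p.2 * pdy u p.1 p.2)) (fun p => momentumFlux F u p.1 p.2)
    (fderiv ℝ (fun p : ℝ × ℝ => -(pdx u p.1 p.2 * pdy u p.1 p.2)))
    (fderiv ℝ (fun p : ℝ × ℝ => momentumFlux F u p.1 p.2)) a s b t
    hQ.continuous.continuousOn hT.continuous.continuousOn
    (fun p _ => (hQ.differentiable one_ne_zero p).hasFDerivAt)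
    (fun p _ => (hT.differentiable one_ne_zero p).hasFDerivAt)
    (by
      refine ContinuousOn.integrableOn_compact (isCompact_uIcc.prod isCompact_uIcc)
        (Continuous.continuousOn ?_)
      exact ((hQ.continuous_fderiv one_ne_zero).clm_apply continuous_const).add
        ((hT.continuous_fderiv one_ne_zero).clm_apply continuous_const))
  simp_rw [hdiv] at key
  exact key

lemma IsSolution.abs_integral_le (hu : IsSolution F c u) {G : ℝ}
    (hG : ∀ x y, |pdx u x y| ≤ G) (x : ℝ) {s t : ℝ} (hst : s ≤ t) :
    |∫ y in s..t, -(pdx u x y * pdy u x y)| ≤ 2 * G := by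
  obtain ⟨h3, -, hb, hpos⟩ := hu
  have hy : ContDiff ℝ 1 (fun p : ℝ × ℝ => pdy u p.1 p.2) := contDiff_pdy (by norm_num) h3
  have hyc : Continuous (fun y => pdy u x y) := hy.continuous.comp (Continuous.prodMk_right x)
  have hintegral : ∫ y in s..t, pdy u x y = u x t - u x s :=
    intervalIntegral.integral_eq_sub_of_hasDerivAt
      (fun y _ => hasDerivAt_pdy (h3.of_le (by norm_num)) x y) (hyc.intervalIntegrable _ _)
  have hle : ‖∫ y in s..t, -(pdx u x y * pdy u x y)‖ ≤ ∫ y in s..t, G * pdy u x y := by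
    refine intervalIntegral.norm_integral_le_of_norm_le hst (Eventually.of_forall fun y _ => ?_)
      ((hyc.const_mul G).intervalIntegrable _ _)
    rw [norm_neg, norm_mul, norm_eq_abs, norm_eq_abs, abs_of_pos (hpos x y)]
    exact mul_le_mul_of_nonneg_right (hG x y) (hpos x y).le
  rw [intervalIntegral.integral_const_mul, hintegral, norm_eq_abs] at hle
  have hG0 : 0 ≤ G := (abs_nonneg _).trans (hG 0 0)
  have := abs_le.1 (hb x t)
  have := abs_le.1 (hb x s)
  nlinarith

lemma IsSolution.momentum_inequality (hF : BalancedDoubleWell F) (hu : IsSolution F c u) {G : ℝ}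
    (hG : ∀ x y, |pdx u x y| ≤ G) (a b : ℝ) {s t : ℝ} (hst : s ≤ t) :
    ∫ x in a..b, ∫ y in s..t, c * pdy u x y ^ 2 ≤
      4 * G + (∫ x in a..b, momentumFlux F u x t) - ∫ x in a..b, momentumFlux F u x s := by
  rw [hu.momentum_identity hF]
  have h1 := abs_le.1 (hu.abs_integral_le hG a hst)
  have h2 := abs_le.1 (hu.abs_integral_le hG b hst)
  linarith [h1.1, h2.2]

lemma IsSolution.monotone (hu : IsSolution F c u) (x : ℝ) : Monotone (u x) :=
  (strictMono_of_deriv_pos (f := u x) (hu.2.2.2 x)).monotone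

end Solution

section FarField

variable {F : ℝ → ℝ} {c : ℝ} {u : ℝ → ℝ → ℝ}

lemma IsSolution.exists_momentumFlux_small (hF : BalancedDoubleWell F) (hu : IsSolution F c u)
    {σ : ℝ} (hσ : |σ| ≤ 1) (hFσ : F σ = 0) (hFσ' : deriv F σ = 0) {ε : ℝ} (hε : 0 < ε) :
    ∃ δ, 0 < δ ∧ ∀ a b, (∀ x y, |x - a| ≤ 1 → |y - b| ≤ 1 → |u x y - σ| ≤ δ) →
      |momentumFlux F u a b| ≤ ε := by
  obtain ⟨C, hC, h, -⟩ := hu.exists_gradient_bound hF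
  obtain ⟨η, hη, hcont⟩ := Metric.continuousAt_iff.1 (hF.1.continuous.continuousAt (x := σ))
    (ε / 2) (half_pos hε)
  have hδ : 0 < min (η / 2) (√(ε / 2) / C) := by positivity
  refine ⟨_, hδ, fun a b hab => ?_⟩
  obtain ⟨hx, hy⟩ := h σ hσ hFσ' a b _ hδ hab
  have hCδ : C * min (η / 2) (√(ε / 2) / C) ≤ √(ε / 2) := by
    refine (mul_le_mul_of_nonneg_left (min_le_right _ _) hC.le).trans_eq ?_
    field_simp
  have hx2 : pdx u a b ^ 2 ≤ ε / 2 := by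
    rw [← sq_sqrt (half_pos hε).le]
    exact sq_le_sq' (abs_le.1 (hx.trans hCδ)).1 (abs_le.1 (hx.trans hCδ)).2
  have hy2 : pdy u a b ^ 2 ≤ ε / 2 := by
    rw [← sq_sqrt (half_pos hε).le]
    exact sq_le_sq' (abs_le.1 (hy.trans hCδ)).1 (abs_le.1 (hy.trans hCδ)).2
  have hFu : |F (u a b)| < ε / 2 := by
    have := hcont (x := u a b) (by
      rw [dist_eq]
      exact (hab a b (by simp) (by simp)).trans_lt
        ((min_le_left _ _).trans_lt (by linarith)))
    rwa [hFσ, dist_zero_right, norm_eq_abs] at this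
  rw [momentumFlux, abs_le]
  have := abs_lt.1 hFu
  constructor <;> nlinarith [sq_nonneg (pdx u a b), sq_nonneg (pdy u a b)]

lemma IsTravelingWave.eventually_near_one (hu : IsTravelingWave F c u) (a b : ℝ) {δ : ℝ}
    (hδ : 0 < δ) : ∀ᶠ R in atTop, ∀ x ∈ Set.Icc a b, ∀ y ≥ R, |u x y - 1| ≤ δ := by
  have hdini : TendstoUniformlyOn (fun y x => u x y) (fun _ => 1) atTop (Set.Icc a b) :=
    Monotone.tendstoUniformlyOn_of_forall_tendsto isCompact_Icc
      (fun y => (hu.1.1.continuous.comp (Continuous.prodMk_left y)).continuousOn)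
      (fun x _ => hu.1.monotone x) continuousOn_const (fun x _ => hu.2.1 x)
  filter_upwards [eventually_forall_ge_atTop.2 (Metric.tendstoUniformlyOn_iff.1 hdini δ hδ)]
    with R hR x hx y hy
  have := hR y hy x hx
  rw [dist_comm, dist_eq] at this
  exact this.le

lemma IsTravelingWave.eventually_near_neg_one (hu : IsTravelingWave F c u) (a b : ℝ) {δ : ℝ}
    (hδ : 0 < δ) : ∀ᶠ R in atTop, ∀ x ∈ Set.Icc a b, ∀ y ≥ R, |u x (-y) - (-1)| ≤ δ := by
  have hdini : TendstoUniformlyOn (fun y x => u x (-y)) (fun _ => -1) atTop (Set.Icc a b) :=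
    Antitone.tendstoUniformlyOn_of_forall_tendsto isCompact_Icc
      (fun y => (hu.1.1.continuous.comp (Continuous.prodMk_left (-y))).continuousOn)
      (fun x _ => fun s t hst => hu.1.monotone x (neg_le_neg hst)) continuousOn_const
      (fun x _ => (hu.2.2 x).comp tendsto_neg_atTop_atBot)
  filter_upwards [eventually_forall_ge_atTop.2 (Metric.tendstoUniformlyOn_iff.1 hdini δ hδ)]
    with R hR x hx y hy
  have := hR y hy x hx
  rw [dist_comm, dist_eq] at this
  exact this.le

lemma IsTravelingWave.eventually_momentumFlux_small (hF : BalancedDoubleWell F)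
    (hu : IsTravelingWave F c u) (a b : ℝ) {ε : ℝ} (hε : 0 < ε) :
    ∀ᶠ R in atTop, ∀ x ∈ Set.Icc a b,
      |momentumFlux F u x R| ≤ ε ∧ |momentumFlux F u x (-R)| ≤ ε := by
  obtain ⟨δ₁, hδ₁, h₁⟩ := hu.1.exists_momentumFlux_small hF (σ := 1) (by simp)
    hF.2.2.2.2.2.2.2.2 hF.2.2.1 hε
  obtain ⟨δ₂, hδ₂, h₂⟩ := hu.1.exists_momentumFlux_small hF (σ := -1) (by simp)
    hF.2.2.2.2.2.2.2.1 hF.2.1 hε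
  have hshift : Tendsto (fun R : ℝ => R - 1) atTop atTop :=
    tendsto_atTop_add_const_right _ _ tendsto_id
  filter_upwards [hshift.eventually (hu.eventually_near_one (a - 1) (b + 1) hδ₁),
    hshift.eventually (hu.eventually_near_neg_one (a - 1) (b + 1) hδ₂)] with R hR₁ hR₂ x hx
  constructor
  · refine h₁ x R fun s t hs ht => hR₁ s ?_ t ?_
    · rw [abs_le] at hs
      constructor <;> linarith [hx.1, hx.2]
    · linarith [(abs_le.1 ht).1]
  · refine h₂ x (-R) fun s t hs ht => ?_
    have := hR₂ s (by rw [abs_le] at hs; constructor <;> linarith [hx.1, hx.2]) (-t)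
      (by linarith [(abs_le.1 ht).2])
    rwa [neg_neg] at this

/-- Finiteness of the dissipation `c ∫∫ uᵧ²`. -/
lemma IsTravelingWave.integrable_sq_pdy (hF : BalancedDoubleWell F) (hc : 0 < c)
    (hu : IsTravelingWave F c u) : Integrable (fun p : ℝ × ℝ => c * pdy u p.1 p.2 ^ 2) := by
  obtain ⟨G, hG, hgrad⟩ := hu.1.exists_gradient_le hF
  have hflux : ∀ n : ℕ, ∃ R : ℝ, n ≤ R ∧ ∀ x ∈ Set.Icc (-(n : ℝ)) n,
      |momentumFlux F u x R| ≤ 1 / (2 * n + 1) ∧ |momentumFlux F u x (-R)| ≤ 1 / (2 * n + 1) :=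
    fun n => ((eventually_ge_atTop (n : ℝ)).and
      (hu.eventually_momentumFlux_small hF (-n) n (by positivity))).exists
  choose R hRn hR using hflux
  have hcont : Continuous (fun p : ℝ × ℝ => c * pdy u p.1 p.2 ^ 2) := by
    have : ContDiff ℝ 1 (fun p : ℝ × ℝ => pdy u p.1 p.2) := contDiff_pdy (by norm_num) hu.1.1
    exact continuous_const.mul (this.continuous.pow 2)
  have hTc : ∀ y, Continuous fun x => momentumFlux F u x y := fun y =>
    (hu.1.contDiff_momentumFlux hF).continuous.comp (Continuous.prodMk_left y)
  have hintegral : ∀ n : ℕ, IntegrableOn (fun p : ℝ × ℝ => c * pdy u p.1 p.2 ^ 2)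
      (Set.Icc (-(n : ℝ)) n ×ˢ Set.Icc (-R n) (R n)) := fun n =>
    hcont.continuousOn.integrableOn_compact (isCompact_Icc.prod isCompact_Icc)
  have hcover : AECover (volume : Measure (ℝ × ℝ)) atTop
      (fun n : ℕ => Set.Icc (-(n : ℝ)) n ×ˢ Set.Icc (-R n) (R n)) := by
    refine ⟨Eventually.of_forall fun p => ?_,
      fun n => measurableSet_Icc.prod measurableSet_Icc⟩
    filter_upwards [eventually_ge_atTop ⌈max |p.1| |p.2|⌉₊] with n hn
    have hn' : max |p.1| |p.2| ≤ n := (Nat.le_ceil _).trans (by exact_mod_cast hn)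
    exact ⟨abs_le.1 ((le_max_left _ _).trans hn'),
      abs_le.1 ((le_max_right _ _).trans (hn'.trans (hRn n)))⟩
  refine hcover.integrable_of_integral_bounded_of_nonneg_ae (4 * G + 2) hintegral
    (Eventually.of_forall fun p => by positivity) (Eventually.of_forall fun n => ?_)
  have hn0 : -(n : ℝ) ≤ n := by linarith [Nat.cast_nonneg (α := ℝ) n]
  have hR0 : -R n ≤ R n := by linarith [hRn n, Nat.cast_nonneg (α := ℝ) n]
  have hbound : ∀ y, (∀ x ∈ Set.Icc (-(n : ℝ)) n, |momentumFlux F u x y| ≤ 1 / (2 * n + 1)) →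
      |∫ x in (-(n : ℝ))..n, momentumFlux F u x y| ≤ 1 := by
    intro y hy
    have := intervalIntegral.norm_integral_le_of_norm_le_const (a := -(n : ℝ)) (b := n)
      (f := fun x => momentumFlux F u x y) (C := 1 / (2 * n + 1)) (fun x hx => by
        rw [Set.uIoc_of_le hn0] at hx
        exact hy x ⟨hx.1.le, hx.2⟩)
    rw [norm_eq_abs] at this
    refine this.trans ?_
    rw [abs_of_nonneg (by linarith), div_mul_eq_mul_div, div_le_one (by positivity)]
    linarith
  have hineq := hu.1.momentum_inequality hF (fun x y => (hgrad x y).1) (-(n : ℝ)) n hR0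
  have h1 := abs_le.1 (hbound (R n) fun x hx => (hR n x hx).1)
  have h2 := abs_le.1 (hbound (-R n) fun x hx => (hR n x hx).2)
  rw [Measure.volume_eq_prod, setIntegral_prod _ (hintegral n), integral_Icc_eq_integral_Ioc,
    ← intervalIntegral.integral_of_le hn0]
  simp_rw [integral_Icc_eq_integral_Ioc, ← intervalIntegral.integral_of_le hR0]
  linarith [h1.2, h2.1]

lemma abs_sub_le_of_gradient_le {w : ℝ → ℝ → ℝ}
    (hw : ContDiff ℝ 1 (fun p : ℝ × ℝ => w p.1 p.2)) {B : ℝ}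
    (hB : ∀ x y, |pdx w x y| ≤ B ∧ |pdy w x y| ≤ B) (x y x' y' : ℝ) :
    |w x' y' - w x y| ≤ B * |x' - x| + B * |y' - y| := by
  have h1 : |w x' y' - w x y'| ≤ B * |x' - x| :=
    convex_univ.norm_image_sub_le_of_norm_hasDerivWithin_le (f := fun t => w t y')
      (fun t _ => (hasDerivAt_pdx hw t y').hasDerivWithinAt) (fun t _ => (hB t y').1)
      (Set.mem_univ x) (Set.mem_univ x')
  have h2 : |w x y' - w x y| ≤ B * |y' - y| :=
    convex_univ.norm_image_sub_le_of_norm_hasDerivWithin_le (f := fun t => w x t)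
      (fun t _ => (hasDerivAt_pdy hw x t).hasDerivWithinAt) (fun t _ => (hB x t).2)
      (Set.mem_univ y) (Set.mem_univ y')
  have := abs_add_le (w x' y' - w x y') (w x y' - w x y)
  rw [sub_add_sub_cancel] at this
  linarith

/-- `uᵧ` tends to zero as `|x| → ∞`, uniformly in `y`. -/
lemma IsTravelingWave.exists_pdy_lt (hF : BalancedDoubleWell F) (hc : 0 < c)
    (hu : IsTravelingWave F c u) {ε : ℝ} (hε : 0 < ε) :
    ∃ X : ℝ, ∀ x y, X ≤ |x| → pdy u x y < ε := by
  obtain ⟨G, hG, hgrad⟩ := hu.1.exists_gradient_le hF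
  obtain ⟨C, hC, -, hpdy⟩ := hu.1.exists_gradient_bound hF
  have hlip := abs_sub_le_of_gradient_le (w := pdy u) (contDiff_pdy (by norm_num) hu.1.1)
    (B := C * G) (fun a b => hpdy a b G hG fun x y _ _ => (hgrad x y).2)
  have hintegral := hu.integrable_sq_pdy hF hc
  have hCG : 0 < C * G := by positivity
  set r := min 1 (ε / (4 * (C * G))) with hr
  have hr0 : 0 < r := by positivity
  have hr1 : r ≤ 1 := min_le_left _ _
  have hrε : C * G * r ≤ ε / 4 := by
    refine (mul_le_mul_of_nonneg_left (min_le_right _ _) hCG.le).trans_eq ?_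
    field_simp
  have hη : 0 < c * (ε / 2) ^ 2 * (2 * r * (2 * r)) := by positivity
  have hmeas : ∀ n : ℕ, MeasurableSet {p : ℝ × ℝ | (n : ℝ) ≤ |p.1|} := fun n =>
    (isClosed_le continuous_const continuous_fst.abs).measurableSet
  have htail := tendsto_setIntegral_of_antitone (μ := volume)
    (s := fun n : ℕ => {p : ℝ × ℝ | (n : ℝ) ≤ |p.1|}) hmeas
    (fun m n hmn p (hp : (n : ℝ) ≤ |p.1|) =>
      show (m : ℝ) ≤ |p.1| from (Nat.cast_le.2 hmn).trans hp) ⟨0, hintegral.integrableOn⟩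
  have hempty : ⋂ n : ℕ, {p : ℝ × ℝ | (n : ℝ) ≤ |p.1|} = ∅ := by
    refine Set.eq_empty_of_forall_notMem fun p hp => ?_
    obtain ⟨n, hn⟩ := exists_nat_gt |p.1|
    exact absurd (Set.mem_iInter.1 hp n) (not_le.2 hn)
  rw [hempty, setIntegral_empty] at htail
  obtain ⟨n, hn⟩ := (htail.eventually_lt_const hη).exists
  refine ⟨n + 1, fun x y hx => ?_⟩
  by_contra! hge
  set Q : Set (ℝ × ℝ) := Set.Icc (x - r) (x + r) ×ˢ Set.Icc (y - r) (y + r) with hQ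
  have hQm : MeasurableSet Q := measurableSet_Icc.prod measurableSet_Icc
  have hsub : Q ⊆ {p : ℝ × ℝ | (n : ℝ) ≤ |p.1|} := by
    rintro ⟨s, t⟩ ⟨hs, -⟩
    have h1 : |x - s| ≤ r := abs_le.2 ⟨by linarith [hs.2], by linarith [hs.1]⟩
    have h2 := abs_sub_abs_le_abs_sub x s
    change (n : ℝ) ≤ |s|
    linarith
  have hlow : ∀ p ∈ Q, c * (ε / 2) ^ 2 ≤ c * pdy u p.1 p.2 ^ 2 := by
    rintro ⟨s, t⟩ ⟨hs, ht⟩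
    have h1 : |s - x| ≤ r := abs_le.2 ⟨by linarith [hs.1], by linarith [hs.2]⟩
    have h2 : |t - y| ≤ r := abs_le.2 ⟨by linarith [ht.1], by linarith [ht.2]⟩
    have h3 := (abs_le.1 (hlip x y s t)).1
    have h4 := mul_le_mul_of_nonneg_left h1 hCG.le
    have h5 := mul_le_mul_of_nonneg_left h2 hCG.le
    have h6 : ε / 2 ≤ pdy u s t := by linarith
    gcongr
  have hvol : (volume : Measure (ℝ × ℝ)).real Q = 2 * r * (2 * r) := by
    rw [hQ, Measure.volume_eq_prod, measureReal_prod_prod, volume_real_Icc_of_le (by linarith),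
      volume_real_Icc_of_le (by linarith)]
    ring
  have hfin : volume Q ≠ ⊤ := (isCompact_Icc.prod isCompact_Icc).measure_lt_top.ne
  have h1 := setIntegral_ge_of_const_le_real hQm hfin hlow hintegral.integrableOn
  have h2 : ∫ p in Q, c * pdy u p.1 p.2 ^ 2 ≤
      ∫ p in {p : ℝ × ℝ | (n : ℝ) ≤ |p.1|}, c * pdy u p.1 p.2 ^ 2 :=
    setIntegral_mono_set hintegral.integrableOn (Eventually.of_forall fun p => by positivity)
      hsub.eventuallyLE
  rw [hvol] at h1
  linarith

/-- `uᵧᵧ` tends to zero as `|x| → ∞`, uniformly in `y`. -/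
lemma IsTravelingWave.exists_pdy_le (hF : BalancedDoubleWell F) (hc : 0 < c)
    (hu : IsTravelingWave F c u) {ε : ℝ} (hε : 0 < ε) :
    ∃ X : ℝ, ∀ x y, X ≤ |x| → pdy u x y ≤ ε ∧ |pdyy u x y| ≤ ε := by
  obtain ⟨C, hC, -, hpdy⟩ := hu.1.exists_gradient_bound hF
  obtain ⟨X, hX⟩ := hu.exists_pdy_lt hF hc (ε := min ε (ε / C)) (by positivity)
  refine ⟨X + 1, fun x y hx => ⟨?_, ?_⟩⟩
  · exact (hX x y (by linarith)).le.trans (min_le_left _ _)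
  · have h := (hpdy x y (ε / C) (by positivity) fun s t hs _ => by
      rw [abs_of_pos (hu.1.2.2.2 s t)]
      refine (hX s t ?_).le.trans (min_le_right _ _)
      have := abs_sub_abs_le_abs_sub x s
      rw [abs_sub_comm] at this
      linarith).2
    rwa [mul_div_cancel₀ _ hC.ne'] at h

end FarField

/-- The flux of `y`-momentum through a horizontal segment is bounded independently of its length. -/
lemma IsTravelingWave.integral_momentumFlux_le {F : ℝ → ℝ} {c : ℝ} {u : ℝ → ℝ → ℝ}
    (hF : BalancedDoubleWell F) (hc : 0 < c) (hu : IsTravelingWave F c u) {G : ℝ}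
    (hG : ∀ x y, |pdx u x y| ≤ G) {a b : ℝ} (hab : a ≤ b) (s : ℝ) :
    ∫ x in a..b, momentumFlux F u x s ≤ 4 * G + 1 := by
  have hba : 0 ≤ b - a := sub_nonneg.2 hab
  obtain ⟨R, hsR, hR⟩ := ((eventually_ge_atTop s).and
    (hu.eventually_momentumFlux_small hF a b (ε := 1 / (b - a + 1)) (by positivity))).exists
  have htop : |∫ x in a..b, momentumFlux F u x R| ≤ 1 := by
    have := intervalIntegral.norm_integral_le_of_norm_le_const (a := a) (b := b)
      (f := fun x => momentumFlux F u x R) (C := 1 / (b - a + 1)) (fun x hx => by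
        rw [Set.uIoc_of_le hab] at hx
        exact (hR x ⟨hx.1.le, hx.2⟩).1)
    rw [norm_eq_abs] at this
    refine this.trans ?_
    rw [abs_of_nonneg hba, div_mul_eq_mul_div, div_le_one (by positivity)]
    linarith
  have hineq := hu.1.momentum_inequality hF hG a b hsR
  have hnonneg : 0 ≤ ∫ x in a..b, ∫ y in s..R, c * pdy u x y ^ 2 :=
    intervalIntegral.integral_nonneg hab fun x _ =>
      intervalIntegral.integral_nonneg hsR fun y _ => by positivity
  linarith [(abs_le.1 htop).2]

/-- Gronwall estimate for a second order differential inequality. -/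
lemma abs_le_of_second_order_gronwall {f f' f'' : ℝ → ℝ} {a b K ε : ℝ} (hK : 0 ≤ K) (hε : 0 ≤ ε)
    (hf : ∀ x, HasDerivAt f (f' x) x) (hf' : ∀ x, HasDerivAt f' (f'' x) x)
    (ha : f a = 0) (ha' : |f' a| ≤ ε)
    (hbound : ∀ x ∈ Set.Icc a b, |f'' x| ≤ K * |f x| + ε) :
    ∀ x ∈ Set.Icc a b, |f x| ≤ 2 * exp ((K + 1) * (b - a)) * ε := by
  intro x hx
  have hd : ∀ x, HasDerivAt (fun t => (f t, f' t)) (f' x, f'' x) x := fun x =>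
    (hf x).prodMk (hf' x)
  have key := norm_le_gronwallBound_of_norm_deriv_right_le (f := fun t => (f t, f' t))
    (f' := fun t => (f' t, f'' t)) (δ := ε) (K := K + 1) (ε := ε) (a := a) (b := b)
    (fun t _ => (hd t).continuousAt.continuousWithinAt)
    (fun t _ => (hd t).hasDerivWithinAt)
    (by simpa [Prod.norm_def, ha, hε] using ha')
    (fun t ht => by
      have h0 := hbound t ⟨ht.1, ht.2.le⟩
      have h1 : |f t| ≤ ‖(f t, f' t)‖ := norm_fst_le (f t, f' t)
      have h2 : |f' t| ≤ ‖(f t, f' t)‖ := norm_snd_le (f t, f' t)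
      have h3 := mul_le_mul_of_nonneg_left h1 hK
      rw [Prod.norm_def (f' t, f'' t)]
      refine max_le ?_ ?_
      · change |f' t| ≤ _
        nlinarith [norm_nonneg (f t, f' t)]
      · change |f'' t| ≤ _
        linarith [norm_nonneg (f t, f' t)]) x hx
  have hfx : |f x| ≤ ‖(f x, f' x)‖ := norm_fst_le (f x, f' x)
  refine (hfx.trans key).trans ?_
  rw [gronwallBound_of_K_ne_0 (by positivity)]
  have hexp : exp ((K + 1) * (x - a)) ≤ exp ((K + 1) * (b - a)) := by
    gcongr
    exact hx.2
  have hdiv : ε / (K + 1) ≤ ε := div_le_self hε (by linarith)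
  have hexp1 : 1 ≤ exp ((K + 1) * (x - a)) :=
    one_le_exp (mul_nonneg (by linarith) (sub_nonneg.2 hx.1))
  have h1 := mul_le_mul_of_nonneg_left hexp hε
  have h2 := mul_le_mul_of_nonneg_right hdiv (sub_nonneg.2 hexp1)
  change ε * exp ((K + 1) * (x - a)) + ε / (K + 1) * (exp ((K + 1) * (x - a)) - 1) ≤ _
  nlinarith

/-- Implicit differentiation along the zero level curve. -/
lemma pdx_add_pdy_mul_deriv_eq_zero {u : ℝ → ℝ → ℝ} {γ : ℝ → ℝ}
    (hu : ContDiff ℝ 1 (fun p : ℝ × ℝ => u p.1 p.2)) (hγ : ContDiff ℝ 1 γ)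
    (hzero : ∀ x, u x (γ x) = 0) (x : ℝ) :
    pdx u x (γ x) + pdy u x (γ x) * deriv γ x = 0 := by
  have h := (hu.differentiable one_ne_zero (x, γ x)).hasFDerivAt
  have hd := h.comp_hasDerivAt (f := fun t : ℝ => (t, γ t)) x
    ((hasDerivAt_id x).prodMk (hγ.differentiable one_ne_zero x).hasDerivAt)
  have hconst : (fun p : ℝ × ℝ => u p.1 p.2) ∘ (fun t : ℝ => (t, γ t)) = fun _ => 0 :=
    funext hzero
  rw [hconst] at hd
  have h0 := hd.unique (hasDerivAt_const x (0 : ℝ))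
  have hsplit : ((1 : ℝ), deriv γ x) = (1, 0) + deriv γ x • ((0 : ℝ), (1 : ℝ)) := by simp
  rw [hsplit, map_add, map_smul, smul_eq_mul] at h0
  rw [pdx_eq_fderiv hu, pdy_eq_fderiv hu]
  linarith

/-- The slope of the zero level curve `y = γ(x)` blows up as `|x| → ∞`
(Lemma 2.2). -/
theorem slope_tendsto_infinity
    (F : ℝ → ℝ) (hF : BalancedDoubleWell F) (c : ℝ) (hc : 0 < c)
    (u : ℝ → ℝ → ℝ) (hu : IsTravelingWave F c u)
    (γ : ℝ → ℝ) (hγ : ContDiff ℝ 1 γ)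
    (hγlevel : ∀ x y : ℝ, u x y = 0 ↔ y = γ x) :
    Tendsto (fun x => |deriv γ x|) (cocompact ℝ) atTop := by
  obtain ⟨G, hG, hgrad⟩ := hu.1.exists_gradient_le hF
  obtain ⟨K, hK, -, hlip⟩ := hF.exists_bound
  have hF0 := hF.zero_pos
  obtain ⟨η, hη, hηF⟩ := Metric.continuousAt_iff.1 (hF.1.continuous.continuousAt (x := 0))
    (F 0 / 2) (half_pos hF0)
  have h3 := hu.1.1
  have h1 : ContDiff ℝ 1 (fun p : ℝ × ℝ => u p.1 p.2) := h3.of_le (by norm_num)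
  have hx1 : ContDiff ℝ 1 (fun p : ℝ × ℝ => pdx u p.1 p.2) := contDiff_pdx (by norm_num) h3
  refine tendsto_atTop.2 fun M => ?_
  set L := 4 * (4 * G + 2) / F 0 with hL
  have hL0 : 0 < L := by positivity
  set P := |M| + 1 + c with hP
  have hP0 : 0 < P := by positivity
  set E := exp ((K + 1) * L) with hE
  have hE0 : 0 < E := exp_pos _
  set ε := min (min 1 (F 0 / 2)) (η / (4 * E * P)) with hε
  have hε0 : 0 < ε := by positivity
  have hεη : 2 * E * (ε * P) < η := by
    have : ε * (4 * E * P) ≤ η := (le_div_iff₀ (by positivity)).1 (min_le_right _ _)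
    linarith
  have hεF : ε ^ 2 ≤ F 0 / 2 := by
    have h1 : ε ≤ 1 := (min_le_left _ _).trans (min_le_left _ _)
    have h2 : ε ≤ F 0 / 2 := (min_le_left _ _).trans (min_le_right _ _)
    nlinarith
  obtain ⟨X, hX⟩ := hu.exists_pdy_le hF hc hε0
  filter_upwards [(tendsto_norm_cocompact_atTop (E := ℝ)).eventually_ge_atTop (X + L)] with x hx
  rw [norm_eq_abs] at hx
  by_contra! hlt
  set y := γ x with hy
  have hfar : ∀ s ∈ Set.Icc x (x + L), X ≤ |s| := by
    intro s hs
    have h1 : |x - s| ≤ L := abs_le.2 ⟨by linarith [hs.2], by linarith [hs.1]⟩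
    linarith [abs_sub_abs_le_abs_sub x s]
  have hxL : x ∈ Set.Icc x (x + L) := ⟨le_rfl, by linarith⟩
  have hzero : u x y = 0 := (hγlevel x y).2 rfl
  have hslope : |pdx u x y| ≤ ε * P := by
    have h := pdx_add_pdy_mul_deriv_eq_zero h1 hγ (fun s => (hγlevel s _).2 rfl) x
    rw [eq_neg_of_add_eq_zero_left h, abs_neg, abs_mul, abs_of_pos (hu.1.2.2.2 _ _)]
    refine mul_le_mul (hX x (γ x) (hfar x hxL)).1 ?_ (abs_nonneg _) hε0.le
    linarith [le_abs_self M]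
  have hsmall := abs_le_of_second_order_gronwall (f := fun s => u s y) (f' := fun s => pdx u s y)
    (f'' := fun s => pdxx u s y) (a := x) (b := x + L) hK.le (by positivity)
    (fun s => hasDerivAt_pdx h1 s y) (fun s => hasDerivAt_pdx hx1 s y) hzero hslope (by
      intro s hs
      obtain ⟨hs1, hs2⟩ := hX s y (hfar s hs)
      have hpos := hu.1.2.2.2 s y
      have hF' : |deriv F (u s y)| ≤ K * |u s y| := by
        simpa [hF.deriv_zero] using hlip (u s y) 0 (hu.1.2.2.1 s y) (by simp)
      have heq : pdxx u s y = deriv F (u s y) - pdyy u s y - c * pdy u s y := by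
        linarith [hu.1.2.1 s y]
      have hcs := mul_le_mul_of_nonneg_left hs1 hc.le
      have hcs0 := mul_pos hc hpos
      have hεM : 0 ≤ ε * |M| := by positivity
      rw [heq, hP]
      rw [abs_le] at hF' hs2 ⊢
      constructor <;> linarith [hF'.1, hF'.2, hs2.1, hs2.2])
  rw [add_sub_cancel_left] at hsmall
  have hlow : ∀ s ∈ Set.Icc x (x + L), F 0 / 4 ≤ momentumFlux F u s y := by
    intro s hs
    have hd := hηF (x := u s y) (by
      rw [dist_zero_right, norm_eq_abs]
      exact (hsmall s hs).trans_lt hεη)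
    rw [dist_eq, abs_lt] at hd
    have hpos := hu.1.2.2.2 s y
    have hle := (hX s y (hfar s hs)).1
    have hsq : pdy u s y ^ 2 ≤ F 0 / 2 := (pow_le_pow_left₀ hpos.le hle 2).trans hεF
    rw [momentumFlux]
    linarith [sq_nonneg (pdx u s y), hd.1]
  have hTc : Continuous fun s => momentumFlux F u s y :=
    (hu.1.contDiff_momentumFlux hF).continuous.comp (Continuous.prodMk_left y)
  have hintegral : ∫ _ in x..(x + L), F 0 / 4 ≤ ∫ s in x..(x + L), momentumFlux F u s y :=
    intervalIntegral.integral_mono_on (by linarith) intervalIntegrable_const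
      (hTc.intervalIntegrable _ _) hlow
  rw [intervalIntegral.integral_const, add_sub_cancel_left, smul_eq_mul] at hintegral
  have hval : L * (F 0 / 4) = 4 * G + 2 := by
    rw [hL]
    field_simp
  linarith [hu.integral_momentumFlux_le hF hc (fun x y => (hgrad x y).1)
    (show x ≤ x + L by linarith) y]
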